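/- Let w be a Kreweras word of length 3n. Then pro^{3n}(w) is obtained from w by replacing every letter B with C and every letter C with B. In particular, pro^{6n}(w) = w. -/

import Mathlib

/-- The three letters of a Kreweras word. -/
inductive KLetter : Type
  | A | B | C
deriving DecidableEq, Repr

open KLetter

/-- `w` is a Kreweras word of length `3 * n`: it has `n` `A`'s, `n` `B`'s, `n` `C`'s,
and every prefix has at least as many `A`'s as `B`'s and at least as many `A`'s as `C`'s. -/
def IsKrewerasWord (n : ℕ) (w : List KLetter) : Prop :=
  w.length = 3 * n ∧ w.count A = n ∧ w.count B = n ∧ w.count C = n ∧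
  ∀ k : ℕ, (w.take k).count B ≤ (w.take k).count A ∧
           (w.take k).count C ≤ (w.take k).count A

/-- `kiota w` is the smallest index `ι ≥ 1` (1-indexed) such that the prefix of
length `ι` of `w` has equally many `A`'s as `B`'s, or equally many `A`'s as `C`'s
(and `0` if no such index exists). -/
def kiota (w : List KLetter) : ℕ :=
  (((List.range (w.length + 1)).filter fun k =>
      decide (1 ≤ k) &&
      (((w.take k).count A == (w.take k).count B) ||
       ((w.take k).count A == (w.take k).count C))).headD 0)

/-- Promotion of a Kreweras word:
`pro w = (w₂, …, w_{ι-1}, A, w_{ι+1}, …, w_{3n}, w_ι)` where `ι = kiota w`. -/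
def pro (w : List KLetter) : List KLetter :=
  ((w.drop 1).set (kiota w - 2) A) ++ [w.getD (kiota w - 1) A]

/-- The trip permutation `σ_w` of a Kreweras word of length `3 * n`, as a function on
1-indexed positions: `σ_w i` is the unique element of `{1, …, 3n}` congruent to
`kiota (pro^[i-1] w) + i - 1` modulo `3 * n`. -/
def ksigma (n : ℕ) (w : List KLetter) (i : ℕ) : ℕ :=
  (kiota (pro^[i - 1] w) + i - 2) % (3 * n) + 1

/-- `keps w i` is the letter of `pro^[i-1] w` in (1-indexed) position `kiota (pro^[i-1] w)`. -/
def keps (w : List KLetter) (i : ℕ) : KLetter :=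
  (pro^[i - 1] w).getD (kiota (pro^[i - 1] w) - 1) A

/-- The negation swapping `B` and `C` (and fixing `A`). -/
def negL : KLetter → KLetter
  | A => A
  | B => C
  | C => B

open Classical in
/-- The involution `τ_i` on Kreweras words of length `3 * n`: swap the letters in
(1-indexed) positions `i` and `i + 1` if the result is again a Kreweras word,
and otherwise do nothing. -/
noncomputable def tau (n i : ℕ) (w : List KLetter) : List KLetter :=
  let w' := (w.set (i - 1) (w.getD i A)).set i (w.getD (i - 1) A)
  if IsKrewerasWord n w' then w' else w

/-- `tauDown n j = τ_j ∘ τ_{j-1} ∘ ⋯ ∘ τ_1`. -/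
noncomputable def tauDown (n : ℕ) : ℕ → List KLetter → List KLetter
  | 0, w => w
  | j + 1, w => tau n (j + 1) (tauDown n j w)

/-- `evacAux n j = (tauDown n 1) ∘ (tauDown n 2) ∘ ⋯ ∘ (tauDown n j)`. -/
noncomputable def evacAux (n : ℕ) : ℕ → List KLetter → List KLetter
  | 0, w => w
  | j + 1, w => evacAux n j (tauDown n (j + 1) w)

/-- Evacuation on Kreweras words of length `3 * n`:
`evac = (τ_1) ∘ (τ_2 ∘ τ_1) ∘ ⋯ ∘ (τ_{3n-1} ∘ ⋯ ∘ τ_2 ∘ τ_1)`. -/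
noncomputable def evac (n : ℕ) (w : List KLetter) : List KLetter :=
  evacAux n (3 * n - 1) w

/-- `tauAsc n k c = τ_{k+c-1} ∘ ⋯ ∘ τ_{k+1} ∘ τ_k`. -/
noncomputable def tauAsc (n k : ℕ) : ℕ → List KLetter → List KLetter
  | 0, w => w
  | j + 1, w => tau n (k + j) (tauAsc n k j w)

/-- `evacStarAux n j = (tauAsc n 1 (3n-1)) ∘ (tauAsc n 2 (3n-2)) ∘ ⋯ ∘ (tauAsc n j (3n-j))`. -/
noncomputable def evacStarAux (n : ℕ) : ℕ → List KLetter → List KLetter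
  | 0, w => w
  | j + 1, w => evacStarAux n j (tauAsc n (j + 1) (3 * n - (j + 1)) w)

/-- Dual evacuation on Kreweras words of length `3 * n`:
`evac* = (τ_{3n-1} ∘ ⋯ ∘ τ_1) ∘ (τ_{3n-1} ∘ ⋯ ∘ τ_2) ∘ ⋯ ∘ (τ_{3n-1})`. -/
noncomputable def evacStar (n : ℕ) (w : List KLetter) : List KLetter :=
  evacStarAux n (3 * n - 1) w

/-- The three-element "V"-shaped poset: `a < b`, `a < c`, with `b`, `c` incomparable. -/
inductive VP : Type
  | a | b | c
deriving DecidableEq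

instance : PartialOrder VP where
  le x y := x = y ∨ x = VP.a
  le_refl x := Or.inl rfl
  le_trans x y z hxy hyz := by
    rcases hxy with rfl | rfl
    · exact hyz
    · exact Or.inr rfl
  le_antisymm x y hxy hyx := by
    rcases hxy with rfl | rfl
    · rfl
    · rcases hyx with rfl | rfl <;> rfl

/-- The labeling of elements of `V(n) = VP × Fin n` by letters. -/
def vlabel {n : ℕ} (p : VP × Fin n) : KLetter :=
  match p.1 with
  | VP.a => A
  | VP.b => B
  | VP.c => C

/-- `L` is a linear extension of `V(n) = VP × Fin n` (with the product order):
a list of all elements of `V(n)`, each appearing once, such that `L_i ≤ L_j`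
implies `i ≤ j`. -/
def IsLinearExtension (n : ℕ) (L : List (VP × Fin n)) : Prop :=
  L.Nodup ∧ (∀ p : VP × Fin n, p ∈ L) ∧
  ∀ i j : Fin L.length, L.get i ≤ L.get j → (i : ℕ) ≤ (j : ℕ)

/-- A connected Kreweras word: a Kreweras word of length `3 * n` having no proper
nonempty consecutive substring which is itself a Kreweras word. -/
def ConnectedKrewerasWord (n : ℕ) (w : List KLetter) : Prop :=
  IsKrewerasWord n w ∧
  ∀ (u : List KLetter) (m : ℕ), u <:+: w → u ≠ [] → u ≠ w → ¬ IsKrewerasWord m u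


/-- left race condition -/
def KTL (x y : ℕ → ℤ) (o p : ℕ) (k : ℤ) : Prop :=
  ∀ j : ℤ, 0 ≤ j → j < k → ∀ t, o ≤ t → t < p + 1 → x t ≤ x (p+1) - j →
    ∃ u, t ≤ u ∧ u < p + 1 ∧ y u < y (p+1) - j

/-- right race condition -/
def KTR (x y : ℕ → ℤ) (M p : ℕ) (k : ℤ) : Prop :=
  ∀ j : ℤ, 0 ≤ j → j < k → ∀ t, p + 1 ≤ t → t ≤ M → y t < y (p+1) - j →
    ∃ u, p + 1 ≤ u ∧ u ≤ t ∧ x u < x (p+1) - j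

/-- exit on the left -/
def KEL (x y : ℕ → ℤ) (o p q : ℕ) (k : ℤ) : Prop :=
  o ≤ q ∧ q < p + 1 ∧ x q = x (p+1) - k ∧ (∀ t, q < t → t < p + 1 → x (p+1) - k < x t) ∧
    (∀ t, q ≤ t → t < p + 1 → y (p+1) - k ≤ y t)

/-- exit on the right -/
def KER (x y : ℕ → ℤ) (M p q : ℕ) (k : ℤ) : Prop :=
  p + 1 ≤ q ∧ q < M ∧ y (q+1) = y (p+1) - 1 - k ∧
    (∀ t, p + 1 ≤ t → t ≤ q → y (p+1) - k ≤ y t) ∧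
    (∀ t, p + 1 ≤ t → t ≤ q → x (p+1) - k ≤ x t)

/-- the trip from the letter `p` (of the type measured by `x`) ends at `q` -/
def KTrip (x y : ℕ → ℤ) (o M p q : ℕ) : Prop :=
  ∃ k : ℤ, 0 ≤ k ∧ KTR x y M p k ∧
    ((KTL x y o p k ∧ KEL x y o p q k) ∨ (KTL x y o p (k+1) ∧ KER x y M p q k))

/-- Lattice path in the quadrant from time `o` to time `M` -/
structure KPath (x y : ℕ → ℤ) (o M : ℕ) : Prop where
  x0 : x o = 0
  y0 : y o = 0
  xM : x M = 0
  yM : y M = 0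
  nn : ∀ t, o ≤ t → t ≤ M → 0 ≤ x t ∧ 0 ≤ y t
  st : ∀ t, o ≤ t → t < M → (x (t+1) = x t + 1 ∧ y (t+1) = y t + 1) ∨
    (x (t+1) = x t - 1 ∧ y (t+1) = y t) ∨ (x (t+1) = x t ∧ y (t+1) = y t - 1)

/-- first return to the axis `x = 0` with the letter `b`, and promoted path -/
structure KPro (x y x' y' : ℕ → ℤ) (o M b : ℕ) : Prop where
  ob : o < b
  bM : b < M
  xb : x (b+1) = 0
  xb1 : x b = 1
  yb : y (b+1) = y b
  pos : ∀ t, o < t → t ≤ b → 0 < x t ∧ 0 < y t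
  lo : ∀ t, o < t → t ≤ b → x' t = x t - 1 ∧ y' t = y t - 1
  hi : ∀ t, b < t → t ≤ M → x' t = x t + 1 ∧ y' t = y t
  xe : x' (M+1) = 0
  ye : y' (M+1) = 0

theorem kKR_le {x y : ℕ → ℤ} {o M p q : ℕ} {k : ℤ} (hP : KPath x y o M) (hp : o < p)
    (hk : 0 ≤ k) (hR : KTR x y M p k) (h : KER x y M p q k) : k ≤ x (p+1) := by
  obtain ⟨h1, h2, h3, h4, h5⟩ := h
  rcases hk.eq_or_lt with h0 | h0
  · have := hP.nn (p+1) (by omega) (by omega); omega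
  · obtain ⟨u, hu, hu', hu2⟩ := hR (k-1) (by omega) (by omega) (q+1) (by omega) (by omega) (by omega)
    have := hP.nn u (by omega) (by omega); omega

/-- promotion of the same type, `b < p` -/
theorem kstep1 {x y x' y' : ℕ → ℤ} {o M p q b : ℕ} (hP : KPath x y o M)
    (hb : KPro x y x' y' o M b) (hp : b < p) (hpM : p < M)
    (h : KTrip x y o M p q) : q ≠ o ∧ KTrip x' y' (o+1) (M+1) p q := by
  obtain ⟨k, hk, hR, h⟩ := h
  have hx : ∀ t, b < t → t ≤ M → x' t = x t + 1 := fun t h1 h2 => (hb.hi t h1 h2).1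
  have hy : ∀ t, b < t → t ≤ M → y' t = y t := fun t h1 h2 => (hb.hi t h1 h2).2
  have xp := hx (p+1) (by omega) (by omega)
  have yp := hy (p+1) (by omega) (by omega)
  have hob := hb.ob
  have hR' : KTR x' y' (M+1) p k := by
    intro j h0 hj t ht ht' hlt
    have key : ∀ t, p + 1 ≤ t → t ≤ M → y t < y (p+1) - j →
        ∃ u, p + 1 ≤ u ∧ u ≤ t ∧ x' u < x' (p+1) - j := by
      intro t h1 h2 h3
      obtain ⟨u, a, b, c⟩ := hR j h0 hj t h1 h2 h3
      exact ⟨u, a, b, by rw [hx u (by omega) (by omega)]; omega⟩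
    rcases Nat.lt_or_ge M t with h1 | h1
    · have : t = M + 1 := by omega
      subst this
      rw [hb.ye] at hlt
      obtain ⟨u, a, b, c⟩ := key M (by omega) le_rfl (by rw [hP.yM]; omega)
      exact ⟨u, a, by omega, c⟩
    · exact key t ht h1 (by rw [hy t (by omega) h1] at hlt; omega)
  have hL' : ∀ k', k' ≤ x (p+1) + 1 → KTL x y o p k' → KTL x' y' (o+1) p k' := by
    intro k' hk' hL j h0 hj t ht ht' hlt
    have key : ∀ t, b < t → t < p + 1 → x t ≤ x (p+1) - j →
        ∃ u, t ≤ u ∧ u < p + 1 ∧ y' u < y' (p+1) - j := by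
      intro t h1 h2 h3
      obtain ⟨u, a, b, c⟩ := hL j h0 hj t (by omega) h2 h3
      exact ⟨u, a, b, by rw [hy u (by omega) (by omega)]; omega⟩
    rcases Nat.lt_or_ge b t with h1 | h1
    · exact key t h1 ht' (by rw [hx t h1 (by omega)] at hlt; omega)
    · obtain ⟨u, a, b, c⟩ := key (b+1) (by omega) (by omega) (by rw [hb.xb]; omega)
      exact ⟨u, by omega, b, c⟩
  have hn := hP.nn
  rcases h with ⟨hL, h1, h2, h3, h4, h5⟩ | ⟨hL, hE⟩
  · have hq : b < q := by
      by_contra hq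
      have := h4 (b+1) (by omega) (by omega)
      have := hn q h1 (by omega)
      have := hb.xb
      omega
    refine ⟨by omega, k, hk, hR', Or.inl ⟨hL' k ?_ hL, by omega, h2, ?_, ?_, ?_⟩⟩
    · have := hn q h1 (by omega); omega
    · rw [hx q hq (by omega)]; omega
    · intro t a c; have := h4 t a c; rw [hx t (by omega) (by omega)]; omega
    · intro t a c; have := h5 t a c; rw [hy t (by omega) (by omega)]; omega
  · have hkx := kKR_le hP (by omega) hk hR hE
    obtain ⟨h1, h2, h3, h4, h5⟩ := hE
    refine ⟨by omega, k, hk, hR', Or.inr ⟨hL' (k+1) (by omega) hL, h1, by omega, ?_, ?_, ?_⟩⟩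
    · rw [hy (q+1) (by omega) (by omega)]; omega
    · intro t a c; have := h4 t a c; rw [hy t (by omega) (by omega)]; omega
    · intro t a c; have := h5 t a c; rw [hx t (by omega) (by omega)]; omega

/-- promotion of the same type, `p < b` -/
theorem kstep3 {x y x' y' : ℕ → ℤ} {o M p q b : ℕ} (hP : KPath x y o M)
    (hb : KPro x y x' y' o M b) (hp : p < b) (hop : o < p) 
    (h : KTrip x y o M p q) : q ≠ o ∧ KTrip x' y' (o+1) (M+1) p q := by
  obtain ⟨k, hk, hR, h⟩ := h
  have hx : ∀ t, o < t → t ≤ b → x' t = x t - 1 := fun t h1 h2 => (hb.lo t h1 h2).1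
  have hy : ∀ t, o < t → t ≤ b → y' t = y t - 1 := fun t h1 h2 => (hb.lo t h1 h2).2
  have xp := hx (p+1) (by omega) (by omega)
  have yp := hy (p+1) (by omega) (by omega)
  have hob := hb.ob
  have hbM := hb.bM
  have hn := hP.nn
  have hps := hb.pos
  have xp0 := hps (p+1) (by omega) (by omega)
  have xb1 := hb.xb1
  have xb1' := hx b (by omega) le_rfl
  have hst0 := hP.st o le_rfl (by omega)
  have x0 := hP.x0
  have y0 := hP.y0
  have x1 := hn (o+1) (by omega) (by omega)
  have hL' : ∀ k', KTL x y o p k' → KTL x' y' (o+1) p k' := by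
    intro k' hL j h0 hj t ht ht' hlt
    rw [hx t (by omega) (by omega)] at hlt
    obtain ⟨u, a, b, c⟩ := hL j h0 hj t (by omega) ht' (by omega)
    exact ⟨u, a, b, by rw [hy u (by omega) (by omega)]; omega⟩
  have hR' : ∀ k', k' ≤ k → k' ≤ x (p+1) - 1 → KTR x' y' (M+1) p k' := by
    intro k' hk' hkx j h0 hj t ht ht' hlt
    rcases Nat.lt_or_ge b t with h1 | h1
    · refine ⟨b, ?_, by omega, by omega⟩
      by_contra hc
      have : b = p + 1 := by omega
      rw [← this] at hkx; omega
    · rw [hy t (by omega) h1] at hlt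
      obtain ⟨u, a, b, c⟩ := hR j h0 (by omega) t ht (by omega) (by omega)
      exact ⟨u, a, b, by rw [hx u (by omega) (by omega)]; omega⟩
  rcases h with ⟨hL, h1, h2, h3, h4, h5⟩ | ⟨hL, hE⟩
  · have hq : o < q := by
      by_contra hq
      have : q = o := by omega
      subst this
      have := h5 q le_rfl (by omega)
      obtain ⟨u, a, b, c⟩ := hL (k-1) (by omega) (by omega) (q+1) (by omega) (by omega) (by omega)
      have := hps u (by omega) (by omega)
      omega
    have hq' := hps q hq (by omega)
    refine ⟨by omega, k, hk, hR' k le_rfl (by omega), Or.inl ⟨hL' k hL, by omega, h2, ?_, ?_, ?_⟩⟩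
    · rw [hx q hq (by omega)]; omega
    · intro t a c; have := h4 t a c; rw [hx t (by omega) (by omega)]; omega
    · intro t a c; have := h5 t a c; rw [hy t (by omega) (by omega)]; omega
  · have hkx := kKR_le hP (by omega) hk hR hE
    obtain ⟨h1, h2, h3, h4, h5⟩ := hE
    refine ⟨by omega, ?_⟩
    rcases Nat.lt_or_ge q b with hqb | hqb
    · refine ⟨k, hk, ?_, Or.inr ⟨hL' (k+1) hL, h1, by omega, ?_, ?_, ?_⟩⟩
      · intro j h0 hj t ht ht' hlt
        have key : ∀ t, p + 1 ≤ t → t ≤ b → y t < y (p+1) - j →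
            ∃ u, p + 1 ≤ u ∧ u ≤ t ∧ x' u < x' (p+1) - j := by
          intro t h1 h2 h3
          obtain ⟨u, a, b, c⟩ := hR j h0 hj t h1 (by omega) h3
          exact ⟨u, a, b, by rw [hx u (by omega) (by omega)]; omega⟩
        rcases Nat.lt_or_ge b t with hh | hh
        · obtain ⟨u, a, b, c⟩ := key (q+1) (by omega) (by omega) (by omega)
          exact ⟨u, a, by omega, c⟩
        · rw [hy t (by omega) (by omega)] at hlt
          exact key t ht hh (by omega)
      · rw [hy (q+1) (by omega) (by omega)]; omega
      · intro t a c; have := h4 t a c; rw [hy t (by omega) (by omega)]; omega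
      · intro t a c; have := h5 t a c; rw [hx t (by omega) (by omega)]; omega
    · have hqb' : b < q := by
        rcases hqb.eq_or_lt with hh | hh
        · subst hh
          have := h4 b (by omega) le_rfl
          have := hb.yb
          omega
        · exact hh
      have hxb := hb.xb
      have := h5 (b+1) (by omega) (by omega)
      have hkk : k = x (p+1) := by omega
      refine ⟨k-1, by omega, hR' (k-1) (by omega) (by omega), Or.inr ⟨hL' _ ?_, h1, by omega, ?_, ?_, ?_⟩⟩
      · intro j a b; exact hL j a (by omega)
      · have := (hb.hi (q+1) (by omega) (by omega)).2; omega
      · intro t a c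
        have h6 := h4 t a c
        rcases Nat.lt_or_ge b t with hh | hh
        · have := (hb.hi t (by omega) (by omega)).2; omega
        · rw [hy t (by omega) (by omega)]
          by_contra hc
          obtain ⟨u, a, b, c⟩ := hR (k-1) (by omega) (by omega) t a (by omega) (by omega)
          have := hps u (by omega) (by omega)
          omega
      · intro t a c
        have h6 := h5 t a c
        rcases Nat.lt_or_ge b t with hh | hh
        · have := (hb.hi t (by omega) (by omega)).1; omega
        · rw [hx t (by omega) (by omega)]
          have := hps t (by omega) (by omega)
          omega

/-- promotion of the other type, `c < p` -/
theorem kstep2 {x y x' y' : ℕ → ℤ} {o M p q c : ℕ} (hP : KPath x y o M)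
    (hc : KPro y x y' x' o M c) (hp : c < p) (hpM : p < M)
    (h : KTrip x y o M p q) : KTrip x' y' (o+1) (M+1) p (if q = o then M else q) := by
  obtain ⟨k, hk, hR, h⟩ := h
  have hx : ∀ t, c < t → t ≤ M → x' t = x t := fun t h1 h2 => (hc.hi t h1 h2).2
  have hy : ∀ t, c < t → t ≤ M → y' t = y t + 1 := fun t h1 h2 => (hc.hi t h1 h2).1
  have hxl : ∀ t, o < t → t ≤ c → x' t = x t - 1 := fun t h1 h2 => (hc.lo t h1 h2).2
  have hyl : ∀ t, o < t → t ≤ c → y' t = y t - 1 := fun t h1 h2 => (hc.lo t h1 h2).1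
  have xp := hx (p+1) (by omega) (by omega)
  have yp := hy (p+1) (by omega) (by omega)
  have hoc := hc.ob
  have hn := hP.nn
  have xp0 := hn (p+1) (by omega) (by omega)
  have yc := hc.xb
  have yc1 := hc.xb1
  have xM := hP.xM
  have yM := hP.yM
  have x0 := hP.x0
  -- on the right, up to time `M`
  have hRk : ∀ j, 0 ≤ j → j < k → ∀ t, p + 1 ≤ t → t ≤ M → y' t < y' (p+1) - j →
      ∃ u, p + 1 ≤ u ∧ u ≤ t ∧ x' u < x' (p+1) - j := by
    intro j h0 hj t h1 h2 h3
    rw [hy t (by omega) h2] at h3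
    obtain ⟨u, a, b, c⟩ := hR j h0 hj t h1 h2 (by omega)
    exact ⟨u, a, b, by rw [hx u (by omega) (by omega)]; omega⟩
  have hR' : k ≤ y (p+1) → KTR x' y' (M+1) p k := by
    intro hky j h0 hj t ht ht' hlt
    rcases Nat.lt_or_ge M t with h1 | h1
    · obtain ⟨u, a, b, c⟩ := hRk j h0 hj M (by omega) le_rfl (by rw [hy M (by omega) le_rfl]; omega)
      exact ⟨u, a, by omega, c⟩
    · exact hRk j h0 hj t ht h1 hlt
  have hL' : ∀ k', k' ≤ y (p+1) → KTL x y o p k' → KTL x' y' (o+1) p k' := by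
    intro k' hk' hL j h0 hj t ht ht' hlt
    rcases Nat.lt_or_ge c t with h1 | h1
    · rw [hx t h1 (by omega)] at hlt
      obtain ⟨u, a, b, c⟩ := hL j h0 hj t (by omega) (by omega) (by omega)
      exact ⟨u, a, b, by rw [hy u (by omega) (by omega)]; omega⟩
    · refine ⟨c+1, by omega, by omega, ?_⟩
      rw [hy (c+1) (by omega) (by omega)]; omega
  rcases h with ⟨hL, h1, h2, h3, h4, h5⟩ | ⟨hL, hE⟩
  · have hky : k ≤ y (p+1) := by
      rcases hk.eq_or_lt with h0 | h0
      · omega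
      · have := hn q h1 (by omega)
        obtain ⟨u, a, b, c⟩ := hL (k-1) (by omega) (by omega) o (by omega) (by omega) (by omega)
        have := hn u (by omega) (by omega)
        omega
    rcases Nat.lt_or_ge c q with hq | hq
    · rw [if_neg (by omega)]
      refine ⟨k, hk, hR' hky, Or.inl ⟨hL' k hky hL, by omega, h2, ?_, ?_, ?_⟩⟩
      · rw [hx q hq (by omega)]; omega
      · intro t a c; have := h4 t a c; rw [hx t (by omega) (by omega)]; omega
      · intro t a c; have := h5 t a c; rw [hy t (by omega) (by omega)]; omega
    · have := h5 (c+1) (by omega) (by omega)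
      have hk2 : k = y (p+1) := by omega
      have hL2 : KTL x' y' (o+1) p (k+1) := by
        intro j h0 hj t ht ht' hlt
        rcases lt_or_ge j k with hjk | hjk
        · exact hL' k hky hL j h0 hjk t ht ht' hlt
        · rcases Nat.lt_or_ge c t with h6 | h6
          · have := h4 t (by omega) ht'
            rw [hx t h6 (by omega)] at hlt
            omega
          · exact ⟨c, h6, by omega, by rw [hyl c (by omega) le_rfl]; omega⟩
      split_ifs with hqo
      · subst hqo
        refine ⟨k, hk, hR' hky, Or.inr ⟨hL2, ?_, by omega, ?_, ?_, ?_⟩⟩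
        · omega
        · rw [hc.xe]; omega
        · intro t a b; rw [hy t (by omega) (by omega)]
          have := hn t (by omega) (by omega); omega
        · intro t a b; rw [hx t (by omega) (by omega)]
          have := hn t (by omega) (by omega); omega
      · have hq0 := hc.pos q (by omega) hq
        have hpM2 : p + 1 ≠ M := by
          intro h; rw [h] at h3; omega
        refine ⟨k+1, by omega, ?_, Or.inl ⟨hL2, by omega, h2, ?_, ?_, ?_⟩⟩
        · intro j h0 hj t ht ht' hlt
          rcases lt_or_ge j k with hjk | hjk
          · exact hR' hky j h0 hjk t ht ht' hlt
          · rcases Nat.lt_or_ge M t with h6 | h6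
            · refine ⟨M, by omega, by omega, ?_⟩
              rw [hx M (by omega) le_rfl]; omega
            · rw [hy t (by omega) h6] at hlt
              have := hn t (by omega) h6
              omega
        · rw [hxl q (by omega) hq]; omega
        · intro t a b
          have := h4 t a b
          rcases Nat.lt_or_ge c t with h6 | h6
          · rw [hx t h6 (by omega)]; omega
          · rw [hxl t (by omega) h6]; omega
        · intro t a b
          rcases Nat.lt_or_ge c t with h6 | h6
          · rw [hy t h6 (by omega)]; have := hn t (by omega) (by omega); omega
          · rw [hyl t (by omega) h6]; have := hc.pos t (by omega) h6; omega
  · obtain ⟨h1, h2, h3, h4, h5⟩ := hE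
    rw [if_neg (by omega)]
    have hky : k + 1 ≤ y (p+1) := by
      have := hn (q+1) (by omega) (by omega)
      omega
    refine ⟨k, hk, hR' (by omega), Or.inr ⟨hL' (k+1) (by omega) hL, h1, by omega, ?_, ?_, ?_⟩⟩
    · rw [hy (q+1) (by omega) (by omega)]; omega
    · intro t a c; have := h4 t a c; rw [hy t (by omega) (by omega)]; omega
    · intro t a c; have := h5 t a c; rw [hx t (by omega) (by omega)]; omega

/-- promotion of the other type, `p < c` -/
theorem kstep4 {x y x' y' : ℕ → ℤ} {o M p q c : ℕ} (hP : KPath x y o M)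
    (hc : KPro y x y' x' o M c) (hp : p < c) (hop : o < p) 
    (h : KTrip x y o M p q) : q ≠ o ∧ KTrip x' y' (o+1) (M+1) p q := by
  obtain ⟨k, hk, hR, h⟩ := h
  have hx : ∀ t, o < t → t ≤ c → x' t = x t - 1 := fun t h1 h2 => (hc.lo t h1 h2).2
  have hy : ∀ t, o < t → t ≤ c → y' t = y t - 1 := fun t h1 h2 => (hc.lo t h1 h2).1
  have xp := hx (p+1) (by omega) (by omega)
  have yp := hy (p+1) (by omega) (by omega)
  have hoc := hc.ob
  have hcM := hc.bM
  have hn := hP.nn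
  have hps := hc.pos
  have xp0 := hps (p+1) (by omega) (by omega)
  have yc := hc.xb
  have xc := hc.yb
  have hst0 := hP.st o le_rfl (by omega)
  have x0 := hP.x0
  have y0 := hP.y0
  have x1 := hn (o+1) (by omega) (by omega)
  have hL' : ∀ k', KTL x y o p k' → KTL x' y' (o+1) p k' := by
    intro k' hL j h0 hj t ht ht' hlt
    rw [hx t (by omega) (by omega)] at hlt
    obtain ⟨u, a, b, c⟩ := hL j h0 hj t (by omega) ht' (by omega)
    exact ⟨u, a, b, by rw [hy u (by omega) (by omega)]; omega⟩
  have hR' : KTR x' y' (M+1) p k := by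
    intro j h0 hj t ht ht' hlt
    have key : ∀ t, p + 1 ≤ t → t ≤ c → y t < y (p+1) - j →
        ∃ u, p + 1 ≤ u ∧ u ≤ t ∧ x' u < x' (p+1) - j := by
      intro t h1 h2 h3
      obtain ⟨u, a, b, c⟩ := hR j h0 hj t h1 (by omega) h3
      exact ⟨u, a, b, by rw [hx u (by omega) (by omega)]; omega⟩
    rcases Nat.lt_or_ge c t with h1 | h1
    · have hyt : 0 ≤ y' t := by
        rcases Nat.lt_or_ge M t with h6 | h6
        · have : t = M + 1 := by omega
          rw [this, hc.xe]
        · have := hn t (by omega) h6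
          rw [(hc.hi t h1 h6).1]; omega
      obtain ⟨u, a, b, d⟩ := hR j h0 hj (c+1) (by omega) (by omega) (by omega)
      rcases Nat.lt_or_ge c u with h6 | h6
      · have : u = c + 1 := by omega
        subst this
        have : p + 1 ≠ c := by intro h; rw [h] at d; omega
        refine ⟨c, by omega, by omega, ?_⟩
        rw [hx c (by omega) le_rfl]; omega
      · exact ⟨u, a, by omega, by rw [hx u (by omega) h6]; omega⟩
    · rw [hy t (by omega) h1] at hlt
      exact key t ht h1 (by omega)
  rcases h with ⟨hL, h1, h2, h3, h4, h5⟩ | ⟨hL, hE⟩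
  · have hq : o < q := by
      by_contra hq
      have : q = o := by omega
      subst this
      have := h5 q le_rfl (by omega)
      obtain ⟨u, a, b, c⟩ := hL (k-1) (by omega) (by omega) (q+1) (by omega) (by omega) (by omega)
      have := hps u (by omega) (by omega)
      omega
    refine ⟨by omega, k, hk, hR', Or.inl ⟨hL' k hL, by omega, h2, ?_, ?_, ?_⟩⟩
    · rw [hx q hq (by omega)]; omega
    · intro t a c; have := h4 t a c; rw [hx t (by omega) (by omega)]; omega
    · intro t a c; have := h5 t a c; rw [hy t (by omega) (by omega)]; omega
  · have hkx := kKR_le hP (by omega) hk hR hE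
    obtain ⟨h1, h2, h3, h4, h5⟩ := hE
    have hqc : q < c := by
      by_contra hqc
      rcases Nat.lt_or_ge c q with h6 | h6
      · have := h4 (c+1) (by omega) (by omega)
        have := hn (q+1) (by omega) (by omega)
        omega
      · have : q = c := by omega
        subst this
        rcases lt_or_ge k (x (p+1)) with h7 | h7
        · obtain ⟨u, a, b, c⟩ := hL k hk (by omega) (o+1) (by omega) (by omega) (by omega)
          have := hps u (by omega) (by omega)
          omega
        · obtain ⟨u, a, b, c⟩ := hR (k-1) (by omega) (by omega) (q+1) (by omega) (by omega) (by omega)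
          rcases Nat.lt_or_ge q u with h8 | h8
          · have : u = q + 1 := by omega
            subst this
            have := hps q (by omega) (by omega)
            omega
          · have := hps u (by omega) (by omega)
            omega
    refine ⟨by omega, k, hk, hR', Or.inr ⟨hL' (k+1) hL, h1, by omega, ?_, ?_, ?_⟩⟩
    · rw [hy (q+1) (by omega) (by omega)]; omega
    · intro t a c; have := h4 t a c; rw [hy t (by omega) (by omega)]; omega
    · intro t a c; have := h5 t a c; rw [hx t (by omega) (by omega)]; omega

/-- destination of an `A` at `p`, reached with respect to `y` -/
def KNear (x y : ℕ → ℤ) (M p q : ℕ) : Prop :=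
  p < q ∧ q < M ∧ y (q+1) = y p ∧ x p < x (q+1) ∧ ∀ t, p < t → t ≤ q → x p < x t ∧ y p < y t

theorem kborn {x y : ℕ → ℤ} {x' y' : ℕ → ℤ} {o M b : ℕ} (hP : KPath x y o M)
    (hb : KPro x y x' y' o M b) : KTrip x' y' (o+1) (M+1) M b := by
  have := hb.ob
  have := hb.bM
  have := hb.xe
  have := hb.ye
  have hlo := hb.lo
  have hhi := hb.hi
  have := hlo b (by omega) (by omega)
  have := hb.xb1
  refine ⟨0, le_rfl, fun j _ _ => by omega, Or.inl ⟨fun j _ _ => by omega, by omega, by omega, by omega, ?_, ?_⟩⟩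
  · intro t h1 h2
    have := hP.nn t (by omega) (by omega)
    have := hhi t (by omega) (by omega)
    omega
  · intro t h1 h2
    have := hP.nn t (by omega) (by omega)
    rcases Nat.lt_or_ge b t with h6 | h6
    · have := hhi t (by omega) (by omega)
      omega
    · have := hlo t (by omega) (by omega)
      have := hb.pos t (by omega) (by omega)
      omega

theorem kturn {x y : ℕ → ℤ} {x' y' : ℕ → ℤ} {o M b q : ℕ} (hP : KPath x y o M)
    (hb : KPro x y x' y' o M b) (h : KTrip x y o M b q) : q ≠ o ∧ KNear x' y' (M+1) b q := by
  have hob := hb.ob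
  have hbM := hb.bM
  have hlo := hb.lo
  have hhi := hb.hi
  have lb := hlo b (by omega) (by omega)
  have xb1 := hb.xb1
  have xb := hb.xb
  have yb := hb.yb
  have pb := hb.pos b (by omega) (by omega)
  obtain ⟨k, hk, hR, ⟨hL, h1, h2, h3, h4, h5⟩ | ⟨hL, hE⟩⟩ := h
  · exfalso
    have := hP.nn q h1 (by omega)
    rcases Nat.lt_or_ge o q with h6 | h6
    · have := hb.pos q (by omega) (by omega)
      omega
    · have : q = o := by omega
      subst this
      have := h5 q le_rfl h2
      have := hP.y0
      omega
  · have hkx := kKR_le hP (by omega) hk hR hE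
    obtain ⟨h1, h2, h3, h4, h5⟩ := hE
    have hq1 := hhi (q+1) (by omega) (by omega)
    have hn := hP.nn (q+1) (by omega) (by omega)
    refine ⟨by omega, by omega, by omega, by omega, by omega, ?_⟩
    intro t a c
    have := hhi t (by omega) (by omega)
    have := hP.nn t (by omega) (by omega)
    have := h4 t (by omega) c
    omega

/-- an `A` keeps its destination; promotion in `x` -/
theorem knear1 {x y : ℕ → ℤ} {x' y' : ℕ → ℤ} {o M b p q : ℕ} (hP : KPath x y o M)
    (hb : KPro x y x' y' o M b) (hop : o < p) (hpb : p ≠ b) (h : KNear x y M p q) :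
    KNear x' y' (M+1) p q := by
  have hob := hb.ob
  have hbM := hb.bM
  have hlo := hb.lo
  have hhi := hb.hi
  have xb := hb.xb
  have yb := hb.yb
  obtain ⟨h1, h2, h3, h4, h5⟩ := h
  rcases Nat.lt_or_ge p b with h6 | h6
  · have pp := hb.pos p hop (by omega)
    have hq : q < b := by
      by_contra hq
      rcases Nat.lt_or_ge b q with h7 | h7
      · have := h5 (b+1) (by omega) (by omega); omega
      · have : q = b := by omega
        subst this
        omega
    have := hlo p hop (by omega)
    have := hlo (q+1) (by omega) (by omega)
    refine ⟨h1, by omega, by omega, by omega, ?_⟩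
    intro t a c
    have := hlo t (by omega) (by omega)
    have := h5 t a c
    omega
  · have := hhi p (by omega) (by omega)
    have := hhi (q+1) (by omega) (by omega)
    refine ⟨h1, by omega, by omega, by omega, ?_⟩
    intro t a c
    have := hhi t (by omega) (by omega)
    have := h5 t a c
    omega

/-- an `A` keeps its destination; promotion in `y` -/
theorem knear2 {x y : ℕ → ℤ} {x' y' : ℕ → ℤ} {o M b p q : ℕ} (hP : KPath x y o M)
    (hb : KPro y x y' x' o M b) (hop : o < p) (hpb : p ≠ b) (h : KNear x y M p q) :
    KNear x' y' (M+1) p q := by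
  have hob := hb.ob
  have hbM := hb.bM
  have hlo := hb.lo
  have hhi := hb.hi
  have xb := hb.xb
  have yb := hb.yb
  obtain ⟨h1, h2, h3, h4, h5⟩ := h
  rcases Nat.lt_or_ge p b with h6 | h6
  · have pp := hb.pos p hop (by omega)
    have hq : q < b := by
      by_contra hq
      rcases Nat.lt_or_ge b q with h7 | h7
      · have := h5 (b+1) (by omega) (by omega); omega
      · have : q = b := by omega
        subst this
        omega
    have := hlo p hop (by omega)
    have := hlo (q+1) (by omega) (by omega)
    refine ⟨h1, by omega, by omega, by omega, ?_⟩
    intro t a c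
    have := hlo t (by omega) (by omega)
    have := h5 t a c
    omega
  · have := hhi p (by omega) (by omega)
    have := hhi (q+1) (by omega) (by omega)
    refine ⟨h1, by omega, by omega, by omega, ?_⟩
    intro t a c
    have := hhi t (by omega) (by omega)
    have := h5 t a c
    omega

/-- height: number of `A`'s minus number of `l`'s in the prefix of length `t` -/
def kht (l : KLetter) (w : List KLetter) (t : ℕ) : ℤ :=
  ((w.take t).count A : ℤ) - ((w.take t).count l : ℤ)

/-- increment of the height -/
def kdel (l m : KLetter) : ℤ := if m = A then 1 else if m = l then -1 else 0

theorem kht_zero (l : KLetter) (w : List KLetter) : kht l w 0 = 0 := by simp [kht]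

theorem kht_succ {l : KLetter} (hl : l ≠ A) {w : List KLetter} {t : ℕ} (ht : t < w.length) :
    kht l w (t+1) = kht l w t + kdel l (w.getD t A) := by
  have h1 : w.getD t A = w[t] := by simp [List.getD, ht]
  rw [h1]
  unfold kht kdel
  rw [List.take_add_one, List.getElem?_eq_getElem ht]
  simp only [Option.toList_some, List.count_append, List.count_singleton]
  push_cast
  by_cases hA : w[t] = A
  · have : w[t] ≠ l := by rw [hA]; exact hl.symm
    simp [hA, hl.symm]; ring
  · by_cases hL : w[t] = l
    · simp [hL, hl]; ring
    · simp [hA, hL]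

theorem kcount_sum (w : List KLetter) : w.count A + w.count B + w.count C = w.length := by
  induction w with
  | nil => rfl
  | cons a w ih => cases a <;> simp [List.count_cons] <;> omega

theorem KPath.symm {x y : ℕ → ℤ} {o M : ℕ} (h : KPath x y o M) : KPath y x o M :=
  ⟨h.y0, h.x0, h.yM, h.xM, fun t a b => (h.nn t a b).symm, fun t a b => by
    have := h.st t a b; tauto⟩

theorem kpath_BC {n : ℕ} {w : List KLetter} (hw : IsKrewerasWord n w) :
    KPath (kht B w) (kht C w) 0 (3*n) := by
  obtain ⟨h1, h2, h3, h4, h5⟩ := hw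
  refine ⟨kht_zero _ _, kht_zero _ _, ?_, ?_, ?_, ?_⟩
  · rw [kht, ← h1, List.take_length]; omega
  · rw [kht, ← h1, List.take_length]; omega
  · intro t _ _
    have := h5 t
    unfold kht; omega
  · intro t _ ht
    rw [kht_succ (by decide) (by omega), kht_succ (by decide) (by omega)]
    cases w.getD t A <;> simp [kdel] <;> omega

theorem kpath_of {n : ℕ} {w : List KLetter} (hw : IsKrewerasWord n w) {L : KLetter} (hL : L ≠ A) :
    KPath (kht L w) (kht (negL L) w) 0 (3*n) := by
  cases L
  · exact absurd rfl hL
  · exact kpath_BC hw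
  · exact (kpath_BC hw).symm

theorem kw_of_path {n : ℕ} {w : List KLetter} (hl : w.length = 3 * n)
    (h : KPath (kht B w) (kht C w) 0 (3*n)) : IsKrewerasWord n w := by
  have h1 := h.xM
  have h2 := h.yM
  have h3 := kcount_sum w
  rw [kht, ← hl, List.take_length] at h1 h2
  refine ⟨hl, by omega, by omega, by omega, ?_⟩
  have key : ∀ k, k ≤ 3 * n → (w.take k).count B ≤ (w.take k).count A ∧
           (w.take k).count C ≤ (w.take k).count A := by
    intro k hk
    have := h.nn k (by omega) hk
    unfold kht at this; omega
  intro k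
  rcases le_total k (3*n) with hk | hk
  · exact key k hk
  · have := key (3*n) le_rfl
    rw [← hl, List.take_length] at this
    rwa [List.take_of_length_le (by omega)]

theorem negL_negL (l : KLetter) : negL (negL l) = l := by cases l <;> rfl

theorem negL_ne {l : KLetter} (h : l ≠ A) : negL l ≠ A := by cases l <;> simp_all [negL]

/-- promotion data: `b` is the 0-indexed position of the letter `L` used in promotion -/
structure KPS (n : ℕ) (w : List KLetter) (b : ℕ) (L : KLetter) : Prop where
  b1 : 1 ≤ b
  bM : b < 3 * n
  LA : L ≠ A
  lt : w.getD b A = L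
  w0 : w.getD 0 A = A
  hb1 : kht L w (b+1) = 0
  hb : kht L w b = 1
  hy : kht (negL L) w (b+1) = kht (negL L) w b
  pos : ∀ t, 0 < t → t ≤ b → 0 < kht L w t ∧ 0 < kht (negL L) w t
  pr : pro w = ((w.drop 1).set (b-1) A) ++ [L]

theorem kiota_eq {w : List KLetter} {b : ℕ} (hb : b < w.length)
    (h : kht B w (b+1) = 0 ∨ kht C w (b+1) = 0)
    (h2 : ∀ t, 0 < t → t ≤ b → 0 < kht B w t ∧ 0 < kht C w t) : kiota w = b + 1 := by
  unfold kiota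
  rw [List.headD_eq_head?_getD, List.head?_filter]
  have : List.find? (fun k =>
      decide (1 ≤ k) &&
      (((w.take k).count A == (w.take k).count B) ||
       ((w.take k).count A == (w.take k).count C))) (List.range (w.length + 1)) = some (b+1) := by
    rw [List.find?_range_eq_some]
    refine ⟨?_, by simp; omega, ?_⟩
    · unfold kht at h
      simp
      omega
    · intro j hj
      rcases Nat.eq_zero_or_pos j with h0 | h0
      · subst h0; simp
      · have := h2 j h0 (by omega)
        unfold kht at this
        simp
        omega
  rw [this]; rfl

theorem kps_exists {n : ℕ} (hn : 1 ≤ n) {w : List KLetter} (hw : IsKrewerasWord n w) :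
    ∃ b L, KPS n w b L := by
  have hP := kpath_BC hw
  have hl := hw.1
  have hex : ∃ b, b < w.length ∧ (kht B w (b+1) = 0 ∨ kht C w (b+1) = 0) := by
    refine ⟨3*n-1, by omega, Or.inl ?_⟩
    rw [Nat.sub_add_cancel (by omega)]; exact hP.xM
  classical
  obtain ⟨b, ⟨hbl, hb⟩, hmin⟩ : ∃ b, (b < w.length ∧ (kht B w (b+1) = 0 ∨ kht C w (b+1) = 0)) ∧
      ∀ m < b, ¬ (m < w.length ∧ (kht B w (m+1) = 0 ∨ kht C w (m+1) = 0)) :=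
    ⟨Nat.find hex, Nat.find_spec hex, fun m hm => Nat.find_min hex hm⟩
  have hpos : ∀ t, 0 < t → t ≤ b → 0 < kht B w t ∧ 0 < kht C w t := by
    intro t h0 h1
    have := hmin (t-1) (by omega)
    rw [Nat.sub_add_cancel h0] at this
    have h2 := hP.nn t (by omega) (by omega)
    push Not at this
    have := this (by omega)
    omega
  have hio := kiota_eq hbl hb hpos
  have sB : ∀ t, t < w.length → kht B w (t+1) = kht B w t + kdel B (w.getD t A) :=
    fun t h => kht_succ (by decide) h
  have sC : ∀ t, t < w.length → kht C w (t+1) = kht C w t + kdel C (w.getD t A) :=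
    fun t h => kht_succ (by decide) h
  have w0 : w.getD 0 A = A := by
    have h1 := sB 0 (by omega)
    have h2 := sC 0 (by omega)
    have h3 := hP.nn 1 (by omega) (by omega)
    rw [kht_zero] at h1 h2
    cases h : w.getD 0 A
    · rfl
    · rw [h] at h1; simp [kdel] at h1; omega
    · rw [h] at h2; simp [kdel] at h2; omega
  have hb1 : 1 ≤ b := by
    by_contra hc
    have : b = 0 := by omega
    subst this
    have h1 := sB 0 (by omega)
    have h2 := sC 0 (by omega)
    rw [w0, kht_zero] at h1 h2
    simp [kdel] at h1 h2 hb
    omega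
  have hpr : pro w = ((w.drop 1).set (b-1) A) ++ [w.getD b A] := by
    unfold pro; rw [hio]; rfl
  have h1 := sB b hbl
  have h2 := sC b hbl
  have h3 := hpos b (by omega) le_rfl
  have h4 := hP.nn (b+1) (by omega) (by omega)
  cases h : w.getD b A
  · rw [h] at h1 h2; simp [kdel] at h1 h2; omega
  · rw [h] at h1 h2 hpr; simp [kdel] at h1 h2
    exact ⟨b, B, hb1, by omega, by decide, h, w0, by omega, by omega, h2, hpos, hpr⟩
  · rw [h] at h1 h2 hpr; simp [kdel] at h1 h2
    exact ⟨b, C, hb1, by omega, by decide, h, w0, by omega, by omega, h1,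
      fun t a c => (hpos t a c).symm, hpr⟩

section
variable {n : ℕ} {w : List KLetter} {b : ℕ} {L : KLetter}

theorem KPS.len (h : KPS n w b L) (hl : w.length = 3 * n) : (pro w).length = 3 * n := by
  have := h.bM
  rw [h.pr]; simp; omega

theorem KPS.let1 (h : KPS n w b L) (hl : w.length = 3 * n) {t : ℕ} (ht : t + 1 < 3 * n)
    (htb : t + 1 ≠ b) : (pro w).getD t A = w.getD (t+1) A := by
  have hb := h.b1
  rw [h.pr, List.getD_append _ _ _ _ (by simp; omega)]
  simp only [List.getD_eq_getElem?_getD]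
  rw [List.getElem?_set_ne (by omega), List.getElem?_drop, Nat.add_comm]

theorem KPS.let2 (h : KPS n w b L) (hl : w.length = 3 * n) {t : ℕ} 
    (htb : t + 1 = b) : (pro w).getD t A = A := by
  have hb := h.b1
  have := h.bM
  have ht : t = b - 1 := by omega
  subst ht
  rw [h.pr, List.getD_append _ _ _ _ (by simp; omega)]
  simp only [List.getD_eq_getElem?_getD]
  rw [List.getElem?_set_self (by simp; omega)]; rfl

theorem KPS.let3 (h : KPS n w b L) (hl : w.length = 3 * n) {t : ℕ} 
    (ht : t + 1 = 3 * n) : (pro w).getD t A = L := by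
  rw [h.pr, List.getD_append_right _ _ _ _ (by simp; omega)]
  simp
  have : t - (w.length - 1) = 0 := by omega
  simp [this]

theorem KPS.htlo (h : KPS n w b L) (hl : w.length = 3 * n) {l : KLetter} (hlA : l ≠ A) (t : ℕ)
    (ht : t + 1 ≤ b) : kht l (pro w) t = kht l w (t+1) - 1 := by
  have hbM := h.bM
  induction t with
  | zero => rw [kht_succ hlA (by omega), h.w0]; simp [kht_zero, kdel]
  | succ t ih =>
    rw [kht_succ hlA (by rw [h.len hl]; omega), ih (by omega), h.let1 hl (by omega) (by omega),
      kht_succ hlA (t := t+1) (by omega)]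
    ring

theorem KPS.hthi (h : KPS n w b L) (hl : w.length = 3 * n) {l : KLetter} (hlA : l ≠ A) (t : ℕ)
    (ht : b ≤ t) (ht2 : t + 1 ≤ 3 * n) : kht l (pro w) t = kht l w (t+1) - kdel l L := by
  have hb := h.b1
  induction t, ht using Nat.le_induction with
  | base =>
    obtain ⟨c, rfl⟩ : ∃ c, b = c + 1 := ⟨b-1, by omega⟩
    rw [kht_succ hlA (by rw [h.len hl]; omega), h.htlo hl hlA c (by omega), h.let2 hl rfl,
      kht_succ hlA (t := c+1) (by omega), h.lt]
    simp [kdel]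
  | succ t h1 ih =>
    rw [kht_succ hlA (by rw [h.len hl]; omega), ih (by omega), h.let1 hl (by omega) (by omega),
      kht_succ hlA (t := t+1) (by omega)]
    ring

theorem KPS.htend (h : KPS n w b L) (hw : IsKrewerasWord n w) {l : KLetter} (hlA : l ≠ A) :
    kht l (pro w) (3*n) = 0 := by
  have hl := hw.1
  have hbM := h.bM
  obtain ⟨m, hm⟩ : ∃ m, 3 * n = m + 1 := ⟨3*n-1, by omega⟩
  have h1 : kht l w (3*n) = 0 := (kpath_of hw hlA).xM
  rw [hm] at h1 ⊢
  rw [kht_succ hlA (by rw [h.len hl]; omega), h.hthi hl hlA m (by omega) (by omega), h1,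
    h.let3 hl (by omega)]
  ring

theorem KPS.kw (h : KPS n w b L) (hw : IsKrewerasWord n w) : IsKrewerasWord n (pro w) := by
  have hl := hw.1
  have hP := kpath_of hw h.LA
  have hLA := h.LA
  have hNA := negL_ne h.LA
  have hl' := h.len hl
  suffices hs : KPath (kht L (pro w)) (kht (negL L) (pro w)) 0 (3*n) by
    refine kw_of_path hl' ?_
    cases L
    · exact absurd rfl hLA
    · exact hs
    · exact hs.symm
  refine ⟨kht_zero _ _, kht_zero _ _, h.htend hw hLA, h.htend hw hNA, ?_, ?_⟩
  · intro t _ ht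
    rcases Nat.lt_or_ge t b with h1 | h1
    · rw [h.htlo hl hLA t (by omega), h.htlo hl hNA t (by omega)]
      have := h.pos (t+1) (by omega) (by omega)
      omega
    · rcases ht.eq_or_lt with h2 | h2
      · rw [h2, h.htend hw hLA, h.htend hw hNA]; simp
      · rw [h.hthi hl hLA t (by omega) (by omega), h.hthi hl hNA t (by omega) (by omega)]
        have := hP.nn (t+1) (by omega) (by omega)
        have h3 : kdel L L = -1 := by simp [kdel, hLA]
        have h4 : kdel (negL L) L = 0 := by cases L <;> simp_all [kdel, negL]
        omega
  · intro t _ ht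
    rw [kht_succ hLA (by omega), kht_succ hNA (by omega)]
    cases L
    · exact absurd rfl hLA
    · cases (pro w).getD t A <;> simp [kdel, negL] <;> omega
    · cases (pro w).getD t A <;> simp [kdel, negL] <;> omega

theorem KPS.kpro (h : KPS n w b L) (hw : IsKrewerasWord n w) (o : ℕ) :
    KPro (fun t => kht L w (t-o)) (fun t => kht (negL L) w (t-o))
      (fun t => kht L (pro w) (t-(o+1))) (fun t => kht (negL L) (pro w) (t-(o+1)))
      o (o+3*n) (o+b) := by
  have hl := hw.1
  have hLA := h.LA
  have hNA := negL_ne h.LA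
  have hb1 := h.b1
  have hbM := h.bM
  refine ⟨by omega, by omega, ?_, ?_, ?_, ?_, ?_, ?_, ?_, ?_⟩
  · simpa [Nat.add_assoc] using h.hb1
  · simpa using h.hb
  · simpa [Nat.add_assoc] using h.hy
  · intro t h1 h2; exact h.pos _ (by omega) (by omega)
  · intro t h1 h2
    have e : t - o = t - (o+1) + 1 := by omega
    simp only [e]
    exact ⟨h.htlo hl hLA _ (by omega), h.htlo hl hNA _ (by omega)⟩
  · intro t h1 h2
    have e : t - o = t - (o+1) + 1 := by omega
    simp only [e]
    have h3 : kdel L L = -1 := by simp [kdel, hLA]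
    have h4 : kdel (negL L) L = 0 := by cases L <;> simp_all [kdel, negL]
    rw [h.hthi hl hLA _ (by omega) (by omega), h.hthi hl hNA _ (by omega) (by omega), h3, h4]
    constructor <;> ring
  · have e : o + 3 * n + 1 - (o+1) = 3 * n := by omega
    simp only [e]; exact h.htend hw hLA
  · have e : o + 3 * n + 1 - (o+1) = 3 * n := by omega
    simp only [e]; exact h.htend hw hNA

theorem kpath_shift (hw : IsKrewerasWord n w) {L : KLetter} (hL : L ≠ A) (o : ℕ) :
    KPath (fun t => kht L w (t-o)) (fun t => kht (negL L) w (t-o)) o (o+3*n) := by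
  have h := kpath_of hw hL
  refine ⟨by simpa using h.x0, by simpa using h.y0, by simpa using h.xM, by simpa using h.yM, ?_, ?_⟩
  · intro t h1 h2; exact h.nn _ (by omega) (by omega)
  · intro t h1 h2
    have e : t + 1 - o = t - o + 1 := by omega
    simp only [e]
    exact h.st _ (by omega) (by omega)

end

/-- state of the hook `p` with birth letter `L` and destination `q` -/
def KSt (n : ℕ) (w : List KLetter) (o p : ℕ) (L : KLetter) (q : ℕ) : Prop :=
  (w.getD (p-o) A = L ∧
    KTrip (fun t => kht L w (t-o)) (fun t => kht (negL L) w (t-o)) o (o+3*n) p q) ∨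
  (w.getD (p-o) A = A ∧
    KNear (fun t => kht L w (t-o)) (fun t => kht (negL L) w (t-o)) (o+3*n) p q)

theorem kst_step {n : ℕ} (hn : 1 ≤ n) {w : List KLetter} (hw : IsKrewerasWord n w)
    {o p q : ℕ} {L : KLetter} (hL : L ≠ A) (hop : o < p) (hp : p < o + 3 * n)
    (h : KSt n w o p L q) : KSt n (pro w) (o+1) p L (if q = o then o + 3 * n else q) := by
  obtain ⟨b, K, hK⟩ := kps_exists hn hw
  have hl := hw.1
  have hP := kpath_shift hw hL o
  have hpro := hK.kpro hw o
  have hM : o + 1 + 3 * n = o + 3 * n + 1 := by omega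
  have hnew : p ≠ o + b → (pro w).getD (p-(o+1)) A = w.getD (p-o) A := by
    intro hpb
    rw [hK.let1 hl (by omega) (by omega)]
    congr 1; omega
  have hnew2 : p = o + b → (pro w).getD (p-(o+1)) A = A := by
    intro hpb
    exact hK.let2 hl (by omega)
  have hlb : p = o + b → w.getD (p-o) A = K := by
    intro hpb; rw [hpb, Nat.add_sub_cancel_left]; exact hK.lt
  unfold KSt
  rw [hM]
  rcases h with ⟨h1, h2⟩ | ⟨h1, h2⟩
  · by_cases hpb : p = o + b
    · right
      have hKL : K = L := (hlb hpb).symm.trans h1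
      subst hKL
      refine ⟨hnew2 hpb, ?_⟩
      subst hpb
      obtain ⟨h3, h4⟩ := kturn hP hpro h2
      rw [if_neg h3]; exact h4
    · left
      refine ⟨(hnew hpb).trans h1, ?_⟩
      by_cases hKL : K = L
      · subst hKL
        obtain ⟨h3, h4⟩ : q ≠ o ∧ KTrip (fun t => kht K (pro w) (t-(o+1)))
            (fun t => kht (negL K) (pro w) (t-(o+1))) (o+1) (o+3*n+1) p q := by
          rcases Nat.lt_or_ge p (o+b) with h5 | h5
          · exact kstep3 hP hpro h5 hop h2
          · exact kstep1 hP hpro (by omega) hp h2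
        rw [if_neg h3]; exact h4
      · have hKL : L = negL K := by
          have := hK.LA
          cases K <;> cases L <;> simp_all [negL]
        subst hKL
        rw [negL_negL] at h2 hP ⊢
        rcases Nat.lt_or_ge p (o+b) with h5 | h5
        · obtain ⟨h3, h4⟩ := kstep4 hP hpro h5 hop h2
          rw [if_neg h3]; exact h4
        · exact kstep2 hP hpro (by omega) hp h2
  · right
    have hpb : p ≠ o + b := by
      intro h
      exact hK.LA ((hlb h).symm.trans h1)
    refine ⟨(hnew hpb).trans h1, ?_⟩
    rw [if_neg (by have := h2.1; omega)]
    by_cases hKL : K = L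
    · subst hKL
      exact knear1 hP hpro hop hpb h2
    · have hKL : L = negL K := by
        have := hK.LA
        cases K <;> cases L <;> simp_all [negL]
      subst hKL
      rw [negL_negL] at h2 hP ⊢
      exact knear2 hP hpro hop hpb h2

theorem kw_iter {n : ℕ} (hn : 1 ≤ n) {w : List KLetter} (hw : IsKrewerasWord n w) (k : ℕ) :
    IsKrewerasWord n (pro^[k] w) := by
  induction k with
  | zero => exact hw
  | succ k ih =>
    rw [Function.iterate_succ_apply']
    obtain ⟨b, K, hK⟩ := kps_exists hn ih
    exact hK.kw ih

/-- periodicity of promotion data -/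
theorem kperiod {n : ℕ} (hn : 1 ≤ n) {w : List KLetter} (hw : IsKrewerasWord n w)
    {b : ℕ} {L : KLetter} (h : KPS n w b L) : KPS n (pro^[3*n] w) b (negL L) := by
  have hb1 := h.b1
  have hbM := h.bM
  have key : ∀ j, j + 1 ≤ 3 * n → KSt n (pro^[j+1] w) (j+1) (3*n) L
      (if b < j + 1 then b + 3 * n else b) := by
    intro j
    induction j with
    | zero =>
      intro _
      rw [if_neg (by omega)]
      left
      refine ⟨h.let3 hw.1 (by omega), ?_⟩
      have := kborn (kpath_shift hw h.LA 0) (h.kpro hw 0)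
      simp only [Nat.zero_add] at this ⊢
      rwa [Nat.add_comm 1]
    | succ j ih =>
      intro hj
      have h1 := kst_step hn (kw_iter hn hw (j+1)) h.LA (by omega) (by omega) (ih (by omega))
      rw [← Function.iterate_succ_apply' pro] at h1
      convert h1 using 1
      split_ifs <;> omega
  have h1 := key (3*n-1) (by omega)
  rw [Nat.sub_add_cancel (by omega), if_pos hbM] at h1
  have hw' := kw_iter hn hw (3*n)
  obtain ⟨b', K, hK⟩ := kps_exists hn hw'
  rcases h1 with ⟨h1, _⟩ | ⟨_, h1⟩
  · rw [Nat.sub_self, hK.w0] at h1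
    exact absurd h1.symm h.LA
  · obtain ⟨h2, h3, h4, h5, h6⟩ := h1
    have e1 : b + 3 * n + 1 - 3 * n = b + 1 := by omega
    simp only [e1, Nat.sub_self, kht_zero] at h4 h5 h6
    have h6' : ∀ t, 0 < t → t ≤ b → 0 < kht L (pro^[3*n] w) t ∧ 0 < kht (negL L) (pro^[3*n] w) t := by
      intro t a c
      have := h6 (t+3*n) (by omega) (by omega)
      rwa [Nat.add_sub_cancel] at this
    have hp := hK.pos
    have hz := hK.hb1
    by_cases hKL : K = L
    · subst hKL
      exfalso
      rcases Nat.lt_trichotomy b b' with hh | hh | hh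
      · have := hp (b+1) (by omega) (by omega); omega
      · subst hh; omega
      · have := h6' (b'+1) (by omega) (by omega); omega
    · have hKL : K = negL L := by
        have := hK.LA
        have := h.LA
        cases K <;> cases L <;> simp_all [negL]
      subst hKL
      rw [negL_negL] at hp
      have : b' = b := by
        rcases Nat.lt_trichotomy b b' with hh | hh | hh
        · have := hp (b+1) (by omega) (by omega); omega
        · omega
        · have := h6' (b'+1) (by omega) (by omega); omega
      subst this
      exact hK

theorem kmain {n : ℕ} {w : List KLetter} (hw : IsKrewerasWord n w) :
    pro^[3 * n] w = w.map negL := by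
  rcases Nat.eq_zero_or_pos n with h0 | hn
  · subst h0
    have : w = [] := List.length_eq_zero_iff.mp (by simpa using hw.1)
    subst this; rfl
  have hk := fun k => kw_iter hn hw k
  have up : ∀ j, j ≤ 3 * n → ∀ t, 3 * n - j ≤ t → t < 3 * n →
      (pro^[3*n] (pro^[j] w)).getD t A = negL ((pro^[j] w).getD t A) := by
    intro j
    induction j with
    | zero => intro _ t h1 h2; omega
    | succ j ih =>
      intro hj t h1 h2
      obtain ⟨b, L, hL⟩ := kps_exists hn (hk j)
      have hL' := kperiod hn (hk j) hL
      have hl := (hk j).1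
      have hl' := (kw_iter hn (hk j) (3*n)).1
      have e : pro^[3*n] (pro^[j+1] w) = pro (pro^[3*n] (pro^[j] w)) := by
        rw [Function.iterate_succ_apply', ← Function.iterate_succ_apply, Function.iterate_succ_apply']
      rw [e, Function.iterate_succ_apply']
      rcases Nat.lt_or_ge (t+1) (3*n) with h3 | h3
      · by_cases h4 : t + 1 = b
        · rw [hL.let2 hl h4, hL'.let2 hl' h4]; rfl
        · rw [hL.let1 hl h3 h4, hL'.let1 hl' h3 h4]
          exact ih (by omega) (t+1) (by omega) h3
      · rw [hL.let3 hl (by omega), hL'.let3 hl' (by omega)]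
  have down : ∀ i, i ≤ 3 * n → ∀ t, t < 3 * n →
      (pro^[3*n] (pro^[3*n-i] w)).getD t A = negL ((pro^[3*n-i] w).getD t A) := by
    intro i
    induction i with
    | zero => intro _ t h; exact up (3*n) le_rfl t (by omega) h
    | succ i ih =>
      intro hi t ht
      have ih := ih (by omega)
      have e0 : 3 * n - i = (3 * n - (i+1)) + 1 := by omega
      rw [e0] at ih
      generalize 3 * n - (i+1) = j at ih
      obtain ⟨b, L, hL⟩ := kps_exists hn (hk j)
      have hL' := kperiod hn (hk j) hL
      have hl := (hk j).1
      have hl' := (kw_iter hn (hk j) (3*n)).1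
      have e : pro^[3*n] (pro^[j+1] w) = pro (pro^[3*n] (pro^[j] w)) := by
        rw [Function.iterate_succ_apply', ← Function.iterate_succ_apply, Function.iterate_succ_apply']
      rw [e, Function.iterate_succ_apply'] at ih
      rcases Nat.eq_zero_or_pos t with h0 | h0
      · subst h0; rw [hL.w0, hL'.w0]; rfl
      · obtain ⟨t, rfl⟩ : ∃ s, t = s + 1 := ⟨t-1, by omega⟩
        by_cases h4 : t + 1 = b
        · rw [h4, hL.lt, hL'.lt]
        · have := ih t (by omega)
          rwa [hL.let1 hl ht h4, hL'.let1 hl' ht h4] at this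
  have h := down (3*n) le_rfl
  rw [Nat.sub_self] at h
  have hl := hw.1
  have hl' := (hk (3*n)).1
  apply List.ext_getElem
  · rw [hl', List.length_map, hl]
  · intro t h1 h2
    have := h t (by omega)
    simp only [Function.iterate_zero, id] at this
    rw [List.getD_eq_getElem _ _ h1, List.getD_eq_getElem _ _ (by omega)] at this
    rw [this, List.getElem_map]

/-- `pro^[3n] w` is obtained from `w` by swapping all `B`'s and `C`'s;
in particular `pro^[6n] w = w`. -/
theorem promotion_order (n : ℕ) (w : List KLetter) (hw : IsKrewerasWord n w) :
    pro^[3 * n] w = w.map negL ∧ pro^[6 * n] w = w := by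
  have h1 := kmain hw
  refine ⟨h1, ?_⟩
  have h2 : IsKrewerasWord n (w.map negL) := by
    rcases Nat.eq_zero_or_pos n with h0 | hn
    · subst h0
      have : w = [] := List.length_eq_zero_iff.mp (by simpa using hw.1)
      subst this; exact hw
    · rw [← h1]; exact kw_iter hn hw _
  have e : 6 * n = 3 * n + 3 * n := by omega
  rw [e, Function.iterate_add_apply, h1, kmain h2, List.map_map]
  have : negL ∘ negL = id := funext negL_negL
  rw [this, List.map_id]
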